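/- Let d ≥ 2 and let α, β ≥ 0 be real numbers with 0 < α ≤ d and α + (d² − 1)β = d, and set C_α = α (1/d) |I⟩⟩⟨⟨I| + β (I_{d²} − (1/d) |I⟩⟩⟨⟨I|) on ℂ^d ⊗ ℂ^d. Then the minimum, over all finite decompositions C_α = Σ_j |K_j⟩⟩⟨⟨K_j| with K_j ∈ Matrix d d ℂ, of max_j rank(K_j) equals ⌈α⌉, the ceiling of α. -/

import Mathlib

open ComplexOrder

noncomputable section

/-- `dyadM K = |K⟩⟩⟨⟨K|`, the rank-one operator associated with the
vectorization `|K⟩⟩ = ∑ i j, K i j |i⟩⊗|j⟩` of the matrix `K`. -/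
def dyadM {m n : Type} (K : Matrix m n ℂ) : Matrix (m × n) (m × n) ℂ :=
  fun p q => K p.1 p.2 * star (K q.1 q.2)

/-!
Write `Ω = |I⟩⟩⟨⟨I|` and `r = ⌈α⌉`. Since `tr (Ω |K⟩⟩⟨⟨K|) = |tr K|² ≤ rank K * ‖K‖²` in the
Frobenius norm, pairing a decomposition of `C_α` into dyads of rank at most `s` with `Ω` gives
`α d ≤ s d`.

For the converse, average `|M⟩⟩⟨⟨M|` over the conjugates `M` of `K` by monomial unitaries. This
gives a combination of the identity, `Ω` and the projection onto the span of the `|i⟩ ⊗ |i⟩`, with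
coefficients depending only on `‖K‖²`, `|tr K|²` and `∑ i, |K i i|²`. The last projection cancels in
a suitable mixture of two seeds `K` that differ in the last quantity only. A rank `r` projection
with constant diagonal and a diagonal one yield, up to scaling, the isotropic operator of weight
`r`; two traceless rank one matrices yield the one of weight `0`; and `C_α` is a convex combination
of the two.
-/

open Matrix
open scoped BigOperators

lemma rank_smul_le {m n R : Type*} [Fintype n] [CommRing R] [StrongRankCondition R] (c : R)
    (A : Matrix m n R) : (c • A).rank ≤ A.rank := by
  classical simpa using rank_mul_le_left A (c • (1 : Matrix n n R))

section Frobenius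

variable {m n : Type*} [Fintype m] [Fintype n]

lemma trace_conjTranspose_mul_self_eq_sum (A : Matrix m n ℂ) :
    (Aᴴ * A).trace = ((∑ i, ∑ j, ‖A i j‖ ^ 2 : ℝ) : ℂ) := by
  rw [Finset.sum_comm]
  simp [trace, mul_apply, Complex.conj_mul']

lemma norm_trace_conjTranspose_mul_sq_le (A B : Matrix m n ℂ) :
    ‖(Aᴴ * B).trace‖ ^ 2 ≤ (∑ i, ∑ j, ‖A i j‖ ^ 2) * ∑ i, ∑ j, ‖B i j‖ ^ 2 := by
  have h := norm_inner_le_norm (𝕜 := ℂ) (WithLp.toLp 2 (vec A)) (WithLp.toLp 2 (vec B))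
  rw [EuclideanSpace.inner_toLp_toLp, dotProduct_comm, star_vec_dotProduct_vec] at h
  have hsq := pow_le_pow_left₀ (norm_nonneg _) h 2
  rw [mul_pow, EuclideanSpace.norm_sq_eq, EuclideanSpace.norm_sq_eq] at hsq
  simpa [Fintype.sum_prod_type_right, vec] using hsq

lemma sum_norm_sq_eq_trace_of_isStarProjection {P : Matrix n n ℂ} (hP : IsStarProjection P) :
    ((∑ i, ∑ j, ‖P i j‖ ^ 2 : ℝ) : ℂ) = P.trace := by
  rw [← trace_conjTranspose_mul_self_eq_sum, ← star_eq_conjTranspose, hP.isSelfAdjoint.star_eq,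
    hP.isIdempotentElem.eq]

lemma exists_isStarProjection_mul_eq (K : Matrix n n ℂ) :
    ∃ P : Matrix n n ℂ, IsStarProjection P ∧ P * K = K ∧ P.trace = K.rank := by
  classical
  let R := (toEuclideanLin K).range
  let Φ := toEuclideanCLM (n := n) (𝕜 := ℂ)
  obtain ⟨P, hP⟩ : ∃ P, Φ P = R.starProjection := EquivLike.surjective Φ _
  refine ⟨P, ⟨EquivLike.injective Φ ?_, EquivLike.injective Φ ?_⟩, EquivLike.injective Φ ?_, ?_⟩
  · rw [map_mul, hP, R.isIdempotentElem_starProjection.eq]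
  · rw [map_star Φ, hP, isSelfAdjoint_starProjection]
  · ext1 v
    rw [map_mul, hP]
    exact R.starProjection_eq_self_iff.mpr ⟨v, rfl⟩
  · have hproj : LinearMap.IsProj R (R.starProjection : _ →ₗ[ℂ] EuclideanSpace ℂ n) :=
      ⟨R.starProjection_apply_mem, fun v => R.starProjection_eq_self_iff.mpr⟩
    let b := (EuclideanSpace.basisFun n ℂ).toBasis
    calc P.trace = LinearMap.trace ℂ _ (toEuclideanLin P) := by
          rw [toEuclideanLin_eq_toLin_orthonormal, trace_toLin_eq]
      _ = Module.finrank ℂ R := by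
          rw [← hproj.trace, ← hP, coe_toEuclideanCLM_eq_toEuclideanLin]
      _ = K.rank := by
          rw [rank_eq_finrank_range_toLin K b b, ← toEuclideanLin_eq_toLin_orthonormal]

lemma norm_trace_sq_le_rank_mul (K : Matrix n n ℂ) :
    ‖K.trace‖ ^ 2 ≤ K.rank * ∑ i, ∑ j, ‖K i j‖ ^ 2 := by
  obtain ⟨P, hP, hPK, htr⟩ := exists_isStarProjection_mul_eq K
  have hrank : ∑ i, ∑ j, ‖P i j‖ ^ 2 = (K.rank : ℝ) := by
    exact_mod_cast (sum_norm_sq_eq_trace_of_isStarProjection hP).trans htr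
  have h := norm_trace_conjTranspose_mul_sq_le P K
  rwa [← star_eq_conjTranspose, hP.isSelfAdjoint.star_eq, hPK, hrank] at h

end Frobenius

section Averages

lemma expect_smul_eq_expect {G X M : Type*} [Group G] [Fintype G] [Fintype X] [MulAction G X]
    [MulAction.IsPretransitive G X] [AddCommMonoid M] [Module ℚ≥0 M] (f : X → M) (x : X) :
    𝔼 g : G, f (g • x) = 𝔼 y, f y := by
  have : Nonempty X := ⟨x⟩
  have horbit (y : X) : 𝔼 g : G, f (g • y) = 𝔼 g : G, f (g • x) := by
    obtain ⟨h, rfl⟩ := MulAction.exists_smul_eq G x y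
    exact Fintype.expect_equiv (Equiv.mulRight h) _ _ fun g => by simp [mul_smul]
  calc 𝔼 g : G, f (g • x) = 𝔼 y, 𝔼 g : G, f (g • y) := by
        simp only [horbit, Fintype.expect_const]
    _ = 𝔼 g : G, 𝔼 y, f (g • y) := Finset.expect_comm _ _ _
    _ = 𝔼 _g : G, 𝔼 y, f y :=
        Finset.expect_congr rfl fun g _ =>
          Fintype.expect_equiv (MulAction.toPerm g) _ _ fun _ => rfl
    _ = 𝔼 y, f y := Fintype.expect_const _

variable {n : Type*} [Fintype n] [DecidableEq n] {𝕜 : Type*} [Field 𝕜] [CharZero 𝕜]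

lemma card_mul_expect_perm_apply (f : n → 𝕜) (i : n) :
    (Fintype.card n : 𝕜) * 𝔼 π : Equiv.Perm n, f (π i) = ∑ a, f a := by
  rw [← Fintype.card_mul_expect]
  exact congrArg _ (expect_smul_eq_expect f i)

lemma card_mul_card_sub_one_mul_expect_perm_apply_apply (f : n → n → 𝕜) {i j : n} (hij : i ≠ j) :
    (Fintype.card n * (Fintype.card n - 1) : 𝕜) * 𝔼 π : Equiv.Perm n, f (π i) (π j) =
      ∑ a, ∑ b, f a b - ∑ a, f a a := by
  have : MulAction.IsPretransitive (Equiv.Perm n) (Fin 2 ↪ n) :=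
    Equiv.Perm.isMultiplyPretransitive n 2
  calc (Fintype.card n * (Fintype.card n - 1) : 𝕜) * 𝔼 π : Equiv.Perm n, f (π i) (π j)
      = Fintype.card (Fin 2 ↪ n) * 𝔼 e : Fin 2 ↪ n, f (e 0) (e 1) := by
        rw [Fintype.card_embedding_eq, Fintype.card_fin, Nat.cast_descFactorial_two,
          ← expect_smul_eq_expect (G := Equiv.Perm n) _ (Function.Embedding.embFinTwo hij)]
        rfl
    _ = ∑ p ∈ Finset.univ.offDiag, f p.1 p.2 := by
        rw [Fintype.card_mul_expect,
          Finset.sum_subtype (p := fun p : n × n => p.1 ≠ p.2) Finset.univ.offDiag (by simp)]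
        exact Fintype.sum_equiv Function.Embedding.twoEmbeddingEquiv _ _ fun _ => rfl
    _ = ∑ a, ∑ b, f a b - ∑ a, f a a := by
        rw [eq_sub_iff_add_eq', ← Finset.sum_diag _ fun p => f p.1 p.2,
          ← Finset.sum_union (Finset.disjoint_diag_offDiag _),
          Finset.diag_union_offDiag, Finset.univ_product_univ, Fintype.sum_prod_type]

-- Characters of order two would not do: they also fail to separate `(i, j)` from `(j, i)`.
lemma expect_stdAddChar_quadruple (i j k l : n) :
    𝔼 x : n → ZMod 3, ZMod.stdAddChar (x i - x j - x k + x l) =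
      if (i = k ∧ j = l) ∨ (i = j ∧ k = l) then (1 : ℂ) else 0 := by
  let φ : (n → ZMod 3) →+ ZMod 3 :=
    let ev := Pi.evalAddMonoidHom fun _ : n => ZMod 3
    ev i - ev j - ev k + ev l
  have hφ : ZMod.stdAddChar.compAddMonoidHom φ = (0 : AddChar _ ℂ) ↔
      (i = k ∧ j = l) ∨ (i = j ∧ k = l) := by
    have hker : ZMod.stdAddChar.compAddMonoidHom φ = (0 : AddChar _ ℂ) ↔ ∀ x, φ x = 0 := by
      simp [AddChar.ext_iff, ZMod.injective_stdAddChar.eq_iff' (AddChar.map_zero_eq_one _)]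
    rw [hker]
    refine ⟨fun h => ?_, ?_⟩
    · have hi := h (Pi.single i 1)
      have hj := h (Pi.single j 1)
      have hk := h (Pi.single k 1)
      have hl := h (Pi.single l 1)
      simp only [φ, AddMonoidHom.add_apply, AddMonoidHom.sub_apply, Pi.evalAddMonoidHom_apply,
        Pi.single_apply] at hi hj hk hl
      grind
    · rintro (⟨rfl, rfl⟩ | ⟨rfl, rfl⟩) x <;> simp [φ]
  simp only [← hφ, ← AddChar.expect_eq_ite]
  rfl

end Averages

section Dyad

lemma dyadM_eq_vecMulVec {m n : Type} (K : Matrix m n ℂ) :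
    dyadM K = vecMulVec (vec Kᵀ) (star (vec Kᵀ)) := rfl

lemma dyadM_smul {m n : Type} (c : ℂ) (K : Matrix m n ℂ) :
    dyadM (c • K) = (‖c‖ ^ 2 : ℝ) • dyadM K := by
  ext p q
  simp only [dyadM, Matrix.smul_apply, smul_eq_mul, star_mul', Complex.real_smul,
    Complex.ofReal_pow, ← Complex.mul_conj', RCLike.star_def]
  ring

variable {m n : Type} [Fintype m] [Fintype n]

lemma trace_dyadM (K : Matrix m n ℂ) :
    (dyadM K).trace = ((∑ i, ∑ j, ‖K i j‖ ^ 2 : ℝ) : ℂ) := by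
  simp [trace, dyadM, Fintype.sum_prod_type, Complex.mul_conj']

lemma trace_dyadM_mul_dyadM (K L : Matrix m n ℂ) :
    (dyadM K * dyadM L).trace = ((‖(Kᴴ * L).trace‖ ^ 2 : ℝ) : ℂ) := by
  have hinner : star (vec Kᵀ) ⬝ᵥ vec Lᵀ = (Kᴴ * L).trace := by
    rw [star_vec_dotProduct_vec, trace_mul_comm,
      conjTranspose_transpose_eq_transpose_conjTranspose, ← transpose_mul, trace_transpose]
  have hinner' : vec Kᵀ ⬝ᵥ star (vec Lᵀ) = star (Kᴴ * L).trace := by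
    rw [← hinner, star_dotProduct, dotProduct_comm, star_star]
  rw [dyadM_eq_vecMulVec, dyadM_eq_vecMulVec, vecMulVec_mul_vecMulVec, trace_vecMulVec,
    dotProduct_smul, hinner, hinner', smul_eq_mul, RCLike.star_def, Complex.mul_conj',
    Complex.ofReal_pow]

end Dyad

/-- The cone of operators of Schmidt number at most `r` on the tensor product of `ℂ^m` and `ℂ^n`:
nonnegative combinations of the dyads `|K⟩⟩⟨⟨K|` of matrices `K` of rank at most `r`. -/
def schmidtCone (m n : Type) [Fintype n] (r : ℕ) : PointedCone ℝ (Matrix (m × n) (m × n) ℂ) :=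
  PointedCone.hull ℝ (dyadM '' {K | K.rank ≤ r})

section SchmidtCone

variable {m n : Type} [Fintype n] {r : ℕ}

lemma dyadM_mem_schmidtCone {K : Matrix m n ℂ} (hK : K.rank ≤ r) : dyadM K ∈ schmidtCone m n r :=
  PointedCone.subset_hull ⟨K, hK, rfl⟩

lemma expect_mem_schmidtCone {ι : Type*} [Fintype ι] {M : ι → Matrix (m × n) (m × n) ℂ}
    (hM : ∀ i, M i ∈ schmidtCone m n r) : 𝔼 i, M i ∈ schmidtCone m n r := by
  rw [Finset.expect, ← NNRat.cast_smul_eq_nnqsmul ℝ]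
  exact PointedCone.smul_mem _ (by positivity) (sum_mem fun i _ => hM i)

lemma mem_schmidtCone_iff {M : Matrix (m × n) (m × n) ℂ} :
    M ∈ schmidtCone m n r ↔
      ∃ (t : ℕ) (K : Fin t → Matrix m n ℂ), M = ∑ j, dyadM (K j) ∧ ∀ j, (K j).rank ≤ r := by
  constructor
  · intro hM
    obtain ⟨t, c, g, rfl⟩ := Submodule.mem_span_set'.mp hM
    choose K hK hKg using fun j => (g j).2
    refine ⟨t, fun j => ((√(c j) : ℝ) : ℂ) • K j, Finset.sum_congr rfl fun j _ => ?_,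
      fun j => (rank_smul_le _ _).trans (hK j)⟩
    rw [dyadM_smul, hKg, Complex.norm_real, Real.norm_eq_abs, sq_abs, Real.sq_sqrt (c j).2]
    rfl
  · rintro ⟨t, K, rfl, hK⟩
    exact sum_mem fun j _ => dyadM_mem_schmidtCone (hK j)

variable [DecidableEq n]

lemma re_trace_dyadM_one_mul_le {M : Matrix (n × n) (n × n) ℂ} (hM : M ∈ schmidtCone n n r) :
    (dyadM (1 : Matrix n n ℂ) * M).trace.re ≤ r * M.trace.re := by
  obtain ⟨t, K, rfl, hK⟩ := mem_schmidtCone_iff.mp hM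
  simp only [trace_sum, Complex.re_sum, Finset.mul_sum]
  refine Finset.sum_le_sum fun j _ => ?_
  rw [trace_dyadM_mul_dyadM, trace_dyadM, conjTranspose_one, Matrix.one_mul, Complex.ofReal_re,
    Complex.ofReal_re]
  exact (norm_trace_sq_le_rank_mul (K j)).trans (by gcongr; exact hK j)

end SchmidtCone

section Twirl

lemma expect_matrix_apply {ι m n M : Type*} [Fintype ι] [AddCommMonoid M] [Module ℚ≥0 M]
    (A : ι → Matrix m n M) (i : m) (j : n) : (𝔼 x, A x) i j = 𝔼 x, A x i j :=
  map_expect (entryLinearMap ℚ≥0 M i j) A Finset.univ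

lemma dyadM_one_apply {n : Type} [DecidableEq n] (i j k l : n) :
    dyadM (1 : Matrix n n ℂ) (i, j) (k, l) = if i = j ∧ k = l then 1 else 0 := by
  simp only [dyadM, one_apply]
  split_ifs <;> simp_all

variable {n : Type} [Fintype n] [DecidableEq n]

/-- The average of `|M⟩⟩⟨⟨M|` over all `M = U * K * Uᴴ` with `U` diagonal and unitary; third roots
of unity as diagonal entries suffice. -/
def phaseTwirl (K : Matrix n n ℂ) : Matrix (n × n) (n × n) ℂ :=
  𝔼 x : n → ZMod 3, dyadM (diagonal (fun i => ZMod.stdAddChar (x i)) * K *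
    (diagonal fun i => ZMod.stdAddChar (x i))ᴴ)

/-- The average of `|M⟩⟩⟨⟨M|` over the conjugates `M` of `K` by monomial unitaries, i.e. products
of diagonal unitaries and permutation matrices. -/
def monomialTwirl (K : Matrix n n ℂ) : Matrix (n × n) (n × n) ℂ :=
  𝔼 π : Equiv.Perm n, phaseTwirl (K.submatrix π π)

lemma monomialTwirl_mem_schmidtCone {r : ℕ} {K : Matrix n n ℂ} (hK : K.rank ≤ r) :
    monomialTwirl K ∈ schmidtCone n n r := by
  refine expect_mem_schmidtCone fun π => expect_mem_schmidtCone fun x => dyadM_mem_schmidtCone ?_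
  exact (rank_mul_le_left _ _).trans <| (rank_mul_le_right _ _).trans <| by rwa [rank_submatrix]

lemma phaseTwirl_apply (K : Matrix n n ℂ) (i j k l : n) :
    phaseTwirl K (i, j) (k, l) =
      if (i = k ∧ j = l) ∨ (i = j ∧ k = l) then K i j * star (K k l) else 0 := by
  have hphase (x : n → ZMod 3) :
      dyadM (diagonal (fun i => ZMod.stdAddChar (x i)) * K *
        (diagonal fun i => ZMod.stdAddChar (x i))ᴴ) (i, j) (k, l) =
      K i j * star (K k l) * ZMod.stdAddChar (x i - x j - x k + x l) := by
    simp only [dyadM, diagonal_conjTranspose, diagonal_mul, mul_diagonal, star_mul', Pi.star_apply,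
      RCLike.star_def, starRingEnd_self_apply, sub_eq_add_neg, AddChar.map_add_eq_mul,
      AddChar.map_neg_eq_conj]
    ring
  simp only [phaseTwirl, expect_matrix_apply, hphase, ← Finset.mul_expect,
    expect_stdAddChar_quadruple, mul_ite, mul_one, mul_zero]

lemma monomialTwirl_apply (K : Matrix n n ℂ) (i j k l : n) :
    monomialTwirl K (i, j) (k, l) = if (i = k ∧ j = l) ∨ (i = j ∧ k = l) then
      𝔼 π : Equiv.Perm n, K (π i) (π j) * star (K (π k) (π l)) else 0 := by
  simp only [monomialTwirl, expect_matrix_apply, phaseTwirl_apply, submatrix_apply]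
  split_ifs <;> simp

lemma card_mul_monomialTwirl_apply_self (K : Matrix n n ℂ) (i : n) :
    Fintype.card n * monomialTwirl K (i, i) (i, i) = ((∑ a, ‖K a a‖ ^ 2 : ℝ) : ℂ) := by
  rw [monomialTwirl_apply, if_pos (by simp),
    card_mul_expect_perm_apply fun a => K a a * star (K a a)]
  simp [Complex.mul_conj']

lemma card_mul_card_sub_one_mul_monomialTwirl_apply_of_ne (K : Matrix n n ℂ) {i j : n}
    (hij : i ≠ j) : (Fintype.card n * (Fintype.card n - 1)) * monomialTwirl K (i, j) (i, j) =
      ((∑ a, ∑ b, ‖K a b‖ ^ 2 - ∑ a, ‖K a a‖ ^ 2 : ℝ) : ℂ) := by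
  rw [monomialTwirl_apply, if_pos (by simp),
    card_mul_card_sub_one_mul_expect_perm_apply_apply (fun a b => K a b * star (K a b)) hij]
  simp [Complex.mul_conj']

lemma card_mul_card_sub_one_mul_monomialTwirl_apply_diag_of_ne (K : Matrix n n ℂ) {i k : n}
    (hik : i ≠ k) : (Fintype.card n * (Fintype.card n - 1)) * monomialTwirl K (i, i) (k, k) =
      ((‖K.trace‖ ^ 2 - ∑ a, ‖K a a‖ ^ 2 : ℝ) : ℂ) := by
  have htrace : ∑ a, ∑ b, K a a * star (K b b) = (‖K.trace‖ ^ 2 : ℂ) := by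
    rw [← Finset.sum_mul_sum, ← star_sum]
    exact Complex.mul_conj' _
  rw [monomialTwirl_apply, if_pos (by simp),
    card_mul_card_sub_one_mul_expect_perm_apply_apply (fun a b => K a a * star (K b b)) hik,
    htrace]
  simp [Complex.mul_conj']

lemma card_mul_card_sub_one_smul_monomialTwirl (K : Matrix n n ℂ) :
    (Fintype.card n * (Fintype.card n - 1) : ℝ) • monomialTwirl K =
      (∑ i, ∑ j, ‖K i j‖ ^ 2 - ∑ i, ‖K i i‖ ^ 2) • 1 +
      (‖K.trace‖ ^ 2 - ∑ i, ‖K i i‖ ^ 2) • dyadM (1 : Matrix n n ℂ) +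
      ((Fintype.card n + 1) * ∑ i, ‖K i i‖ ^ 2 - ∑ i, ∑ j, ‖K i j‖ ^ 2 - ‖K.trace‖ ^ 2) •
        diagonal fun p => if p.1 = p.2 then 1 else 0 := by
  ext ⟨i, j⟩ ⟨k, l⟩
  simp only [Matrix.smul_apply, Matrix.add_apply, Complex.real_smul, dyadM_one_apply, one_apply,
    diagonal_apply, Prod.mk.injEq, Complex.ofReal_mul, Complex.ofReal_sub, Complex.ofReal_natCast,
    Complex.ofReal_one]
  by_cases hc : (i = k ∧ j = l) ∨ (i = j ∧ k = l)
  · by_cases hij : i = j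
    · obtain rfl : k = l := by grind
      subst hij
      by_cases hik : i = k
      · subst hik
        have h := card_mul_monomialTwirl_apply_self K i
        simp only [and_self, if_true]
        push_cast at h ⊢
        linear_combination (Fintype.card n - 1 : ℂ) * h
      · rw [card_mul_card_sub_one_mul_monomialTwirl_apply_diag_of_ne K hik]
        simp [hik]
    · obtain ⟨rfl, rfl⟩ : i = k ∧ j = l := by tauto
      rw [card_mul_card_sub_one_mul_monomialTwirl_apply_of_ne K hij]
      simp [hij]
  · rw [monomialTwirl_apply, if_neg hc]
    rw [not_or] at hc
    simp [hc.1, hc.2]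

-- Along the segment from `K₀` to `K₁` the last coefficient in the previous identity changes sign.
lemma smul_one_add_smul_dyadM_one_mem_schmidtCone {r : ℕ} {K₀ K₁ : Matrix n n ℂ} {F T : ℝ}
    (hK₀ : K₀.rank ≤ r) (hK₁ : K₁.rank ≤ r)
    (hF₀ : ∑ i, ∑ j, ‖K₀ i j‖ ^ 2 = F) (hF₁ : ∑ i, ∑ j, ‖K₁ i j‖ ^ 2 = F)
    (hT₀ : ‖K₀.trace‖ ^ 2 = T) (hT₁ : ‖K₁.trace‖ ^ 2 = T)
    (hD₀ : (Fintype.card n + 1) * ∑ i, ‖K₀ i i‖ ^ 2 ≤ F + T)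
    (hD₁ : F + T ≤ (Fintype.card n + 1) * ∑ i, ‖K₁ i i‖ ^ 2) :
    (Fintype.card n * F - T) • 1 + (Fintype.card n * T - F) • dyadM (1 : Matrix n n ℂ) ∈
      schmidtCone n n r := by
  obtain ⟨a, b, ha, hb, hab, hD⟩ :
      F + T ∈ segment ℝ ((Fintype.card n + 1) * ∑ i, ‖K₀ i i‖ ^ 2)
        ((Fintype.card n + 1) * ∑ i, ‖K₁ i i‖ ^ 2) := by
    rw [segment_eq_Icc (hD₀.trans hD₁)]
    exact ⟨hD₀, hD₁⟩
  have hN : (0 : ℝ) ≤ Fintype.card n * (Fintype.card n - 1) := by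
    rw [← Nat.cast_descFactorial_two]
    positivity
  have hmem (K : Matrix n n ℂ) (hK : K.rank ≤ r) :
      (Fintype.card n * (Fintype.card n - 1) : ℝ) • monomialTwirl K ∈ schmidtCone n n r :=
    PointedCone.smul_mem _ hN (monomialTwirl_mem_schmidtCone hK)
  have hcomb := PointedCone.smul_mem _ (by positivity : (0 : ℝ) ≤ Fintype.card n + 1)
    (add_mem (PointedCone.smul_mem _ ha (hmem K₀ hK₀)) (PointedCone.smul_mem _ hb (hmem K₁ hK₁)))
  rw [card_mul_card_sub_one_smul_monomialTwirl, card_mul_card_sub_one_smul_monomialTwirl,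
    hF₀, hF₁, hT₀, hT₁] at hcomb
  simp only [smul_eq_mul] at hD
  obtain rfl := eq_sub_of_add_eq hab
  convert hcomb using 1
  match_scalars
  · linear_combination hD
  · linear_combination hD
  · linear_combination -(Fintype.card n + 1 : ℝ) * hD

end Twirl

section Projections

lemma exists_conjTranspose_mul_self_eq_card_smul_one {m n : Type*} [Fintype m] [DecidableEq m]
    [Fintype n] [Nonempty n] (h : Fintype.card m ≤ Fintype.card n) :
    ∃ W : Matrix n m ℂ, Wᴴ * W = (Fintype.card n : ℂ) • 1 ∧ ∀ i j, ‖W i j‖ = 1 := by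
  let N := Fintype.card n
  have : NeZero N := ⟨Fintype.card_ne_zero⟩
  let e : n ≃ ZMod N := Fintype.equivOfCardEq (ZMod.card N).symm
  obtain ⟨f⟩ : Nonempty (m ↪ ZMod N) :=
    Function.Embedding.nonempty_of_card_le (h.trans_eq (ZMod.card N).symm)
  refine ⟨of fun i j => ZMod.stdAddChar (e i * f j), ?_,
    fun i j => by rw [of_apply]; exact AddChar.norm_apply _ _⟩
  ext j l
  have hterm (x : ZMod N) : star (ZMod.stdAddChar (x * f j) : ℂ) * ZMod.stdAddChar (x * f l) =
      ZMod.stdAddChar (x * (f l - f j)) := by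
    rw [RCLike.star_def, ← AddChar.map_neg_eq_conj, mul_sub, sub_eq_neg_add,
      AddChar.map_add_eq_mul]
  simp only [mul_apply, conjTranspose_apply, of_apply, hterm, Matrix.smul_apply, one_apply]
  rw [e.sum_comp fun x => (ZMod.stdAddChar (x * (f l - f j)) : ℂ),
    AddChar.sum_mulShift _ (ZMod.isPrimitive_stdAddChar _), ZMod.card]
  simp [sub_eq_zero, eq_comm (a := j), N]

variable {n : Type*} [Fintype n]

lemma exists_isStarProjection_apply_self_eq [Nonempty n] {r : ℕ} (hr : r ≤ Fintype.card n) :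
    ∃ P : Matrix n n ℂ, IsStarProjection P ∧ P.rank ≤ r ∧ P.trace = r ∧
      ∀ i, P i i = r / Fintype.card n := by
  obtain ⟨W, hW, hnorm⟩ := exists_conjTranspose_mul_self_eq_card_smul_one (m := Fin r) (n := n)
    (by simpa)
  have hN : (Fintype.card n : ℂ) ≠ 0 := by simp
  have hdiag (i : n) : (W * Wᴴ) i i = r := by
    simp [mul_apply, Complex.mul_conj', hnorm]
  refine ⟨(Fintype.card n : ℂ)⁻¹ • (W * Wᴴ), ⟨?_, ?_⟩, ?_, ?_, fun i => ?_⟩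
  · rw [IsIdempotentElem, Matrix.smul_mul, Matrix.mul_smul, Matrix.mul_assoc,
      ← Matrix.mul_assoc Wᴴ, hW, Matrix.smul_mul, Matrix.one_mul, Matrix.mul_smul,
      inv_smul_smul₀ hN]
  · simp [IsSelfAdjoint, star_eq_conjTranspose]
  · exact (rank_smul_le _ _).trans <| (rank_mul_le_left _ _).trans <|
      (rank_le_card_width _).trans_eq (Fintype.card_fin r)
  · rw [trace_smul, trace_mul_comm, hW, trace_smul, trace_one, Fintype.card_fin,
      inv_smul_smul₀ hN]
  · rw [Matrix.smul_apply, hdiag, smul_eq_mul, div_eq_inv_mul]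

lemma exists_isStarProjection_norm_apply_self_sq_eq {r : ℕ} (hr : r ≤ Fintype.card n) :
    ∃ Q : Matrix n n ℂ, IsStarProjection Q ∧ Q.rank ≤ r ∧ Q.trace = r ∧
      ∑ i, ‖Q i i‖ ^ 2 = r := by
  classical
  obtain ⟨S, -, hS⟩ := Finset.exists_subset_card_eq (s := (Finset.univ : Finset n)) hr
  refine ⟨diagonal fun i => if i ∈ S then 1 else 0, ⟨?_, ?_⟩, ?_, ?_, ?_⟩
  · simp [IsIdempotentElem, diagonal_mul_diagonal]
  · simp [IsSelfAdjoint, star_eq_conjTranspose, diagonal_conjTranspose, Pi.star_def, apply_ite]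
  · simp [rank_diagonal, Fintype.card_subtype, hS]
  · simp [hS]
  · simp [apply_ite, hS]

end Projections

section Extremes

variable {n : Type} [Fintype n] [DecidableEq n]

lemma card_smul_one_sub_dyadM_one_mem_schmidtCone [Nontrivial n] {r : ℕ} (hr : 1 ≤ r) :
    (Fintype.card n : ℝ) • 1 - dyadM (1 : Matrix n n ℂ) ∈ schmidtCone n n r := by
  obtain ⟨i, j, hij⟩ := exists_pair_ne n
  let u : n → ℂ := Pi.single i 1 + Pi.single j 1
  let v : n → ℂ := Pi.single i (1 / 2) - Pi.single j (1 / 2)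
  have hsum (g : n → ℝ) (hg : ∀ a, a ≠ i → a ≠ j → g a = 0) : ∑ a, g a = g i + g j :=
    Fintype.sum_eq_add i j hij fun a ha => hg a ha.1 ha.2
  have hcard : (2 : ℝ) ≤ Fintype.card n := by exact_mod_cast Fintype.one_lt_card (α := n)
  have h := smul_one_add_smul_dyadM_one_mem_schmidtCone (r := r) (K₀ := single i j 1)
    (K₁ := vecMulVec u v) (F := 1) (T := 0) ?_ ((rank_vecMulVec_le _ _).trans hr) ?_ ?_ ?_ ?_ ?_ ?_
  · simpa [sub_eq_add_neg] using h
  · rw [single_eq_single_vecMulVec_single]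
    exact (rank_vecMulVec_le _ _).trans hr
  · simp [single_apply, ite_and, apply_ite]
  · simp_rw [vecMulVec_apply, norm_mul, mul_pow, ← Finset.mul_sum, ← Finset.sum_mul]
    rw [hsum _ fun a hi hj => by simp [u, hi, hj], hsum _ fun a hi hj => by simp [v, hi, hj]]
    norm_num [u, v, hij, hij.symm]
  · simp [hij]
  · rw [trace_vecMulVec, dotProduct_comm]
    simp [u, v, hij, hij.symm]
  · have hdiag (a : n) : single i j (1 : ℂ) a a = 0 :=
      single_apply_of_ne _ _ _ _ _ fun h => hij (h.1.trans h.2.symm)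
    simp [hdiag]
  · rw [hsum _ fun a hi hj => by simp [u, vecMulVec_apply, hi, hj]]
    suffices (1 : ℝ) ≤ (Fintype.card n + 1) * (1 / 2 ^ 2 + 1 / 2 ^ 2) by
      simpa [u, v, vecMulVec_apply, hij, hij.symm] using this
    linarith

lemma smul_one_add_smul_dyadM_one_mem_schmidtCone_of_le_card [Nonempty n] {r : ℕ}
    (hr : r ≤ Fintype.card n) :
    (Fintype.card n * r - r ^ 2 : ℝ) • 1 +
      (Fintype.card n * r ^ 2 - r : ℝ) • dyadM (1 : Matrix n n ℂ) ∈ schmidtCone n n r := by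
  obtain ⟨P, hP, hPrank, hPtrace, hPdiag⟩ := exists_isStarProjection_apply_self_eq hr
  obtain ⟨Q, hQ, hQrank, hQtrace, hQdiag⟩ := exists_isStarProjection_norm_apply_self_sq_eq hr
  have hcard : (r : ℝ) ≤ Fintype.card n := by exact_mod_cast hr
  have hN : (0 : ℝ) < Fintype.card n := by exact_mod_cast Fintype.card_pos
  have hDP : ∑ i, ‖P i i‖ ^ 2 = (r ^ 2 / Fintype.card n : ℝ) := by
    simp only [hPdiag, norm_div, Complex.norm_natCast, Finset.sum_const, Finset.card_univ,
      nsmul_eq_mul]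
    field_simp
  apply smul_one_add_smul_dyadM_one_mem_schmidtCone hPrank hQrank
  · exact_mod_cast (sum_norm_sq_eq_trace_of_isStarProjection hP).trans hPtrace
  · exact_mod_cast (sum_norm_sq_eq_trace_of_isStarProjection hQ).trans hQtrace
  · simp [hPtrace]
  · simp [hQtrace]
  · rw [hDP, ← mul_div_assoc, div_le_iff₀ hN]
    nlinarith [mul_nonneg (Nat.cast_nonneg (α := ℝ) r) (sub_nonneg.mpr hcard)]
  · rw [hQdiag]
    nlinarith [mul_nonneg (Nat.cast_nonneg (α := ℝ) r) (sub_nonneg.mpr hcard)]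

end Extremes

/-- The isotropic operator `C_α`, for independent weights `α` and `β`: the relation between them
that normalizes its trace is a hypothesis where it is needed. -/
def isotropicOp (n : Type) [Fintype n] [DecidableEq n] (α β : ℝ) : Matrix (n × n) (n × n) ℂ :=
  (α / Fintype.card n) • dyadM 1 + β • (1 - (1 / Fintype.card n : ℝ) • dyadM 1)

section IsotropicOp

variable {n : Type} [Fintype n] [DecidableEq n] {α β : ℝ} {r : ℕ}

lemma trace_dyadM_one : (dyadM (1 : Matrix n n ℂ)).trace = Fintype.card n := by
  simp [trace, Fintype.sum_prod_type, dyadM_one_apply]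

lemma trace_isotropicOp [Nonempty n] :
    (isotropicOp n α β).trace = ((α + (Fintype.card n ^ 2 - 1) * β : ℝ) : ℂ) := by
  have hN : (Fintype.card n : ℂ) ≠ 0 := by simp
  simp only [isotropicOp, trace_add, trace_sub, trace_smul, trace_dyadM_one, trace_one,
    Fintype.card_prod, Complex.real_smul]
  push_cast
  field_simp

lemma trace_dyadM_one_mul_isotropicOp [Nonempty n] :
    (dyadM 1 * isotropicOp n α β).trace = ((α * Fintype.card n : ℝ) : ℂ) := by
  have hN : (Fintype.card n : ℂ) ≠ 0 := by simp
  simp only [isotropicOp, Matrix.mul_add, Matrix.mul_sub, Matrix.mul_smul, Matrix.mul_one,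
    trace_add, trace_sub, trace_smul, trace_dyadM_mul_dyadM, trace_dyadM_one, conjTranspose_one,
    trace_one, Complex.norm_natCast, Complex.real_smul]
  push_cast
  field_simp
  ring

lemma le_of_isotropicOp_mem_schmidtCone [Nonempty n]
    (hnorm : α + (Fintype.card n ^ 2 - 1) * β = Fintype.card n)
    (h : isotropicOp n α β ∈ schmidtCone n n r) : α ≤ r := by
  have hN : (0 : ℝ) < Fintype.card n := by exact_mod_cast Fintype.card_pos
  have htrace := re_trace_dyadM_one_mul_le h
  rw [trace_dyadM_one_mul_isotropicOp, trace_isotropicOp, hnorm, Complex.ofReal_re,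
    Complex.ofReal_re] at htrace
  exact le_of_mul_le_mul_right htrace hN

lemma isotropicOp_mem_schmidtCone [Nontrivial n]
    (hnorm : α + (Fintype.card n ^ 2 - 1) * β = Fintype.card n) (hα : 0 < α) (hαr : α ≤ r)
    (hr : r ≤ Fintype.card n) : isotropicOp n α β ∈ schmidtCone n n r := by
  have hr0 : (0 : ℝ) < r := hα.trans_le hαr
  have hN : (1 : ℝ) < Fintype.card n := by exact_mod_cast Fintype.one_lt_card
  have hN2 : (0 : ℝ) < Fintype.card n ^ 2 - 1 := by nlinarith
  have hβ : β = (Fintype.card n - α) / (Fintype.card n ^ 2 - 1) := by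
    rw [eq_div_iff hN2.ne']
    linear_combination hnorm
  have hmem := add_mem
    (PointedCone.smul_mem _ (by positivity : 0 ≤ α / (r ^ 2 * (Fintype.card n ^ 2 - 1)))
      (smul_one_add_smul_dyadM_one_mem_schmidtCone_of_le_card hr))
    (PointedCone.smul_mem _
      (div_nonneg (sub_nonneg.mpr hαr) (by positivity) :
        0 ≤ (r - α) / (r * (Fintype.card n ^ 2 - 1)))
      (card_smul_one_sub_dyadM_one_mem_schmidtCone (n := n) (Nat.cast_pos.mp hr0)))
  convert hmem using 1
  rw [isotropicOp, hβ]
  match_scalars <;> field_simp <;> ring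

end IsotropicOp

/-- for `0 < α ≤ d`, `β ≥ 0` with `α + (d²-1)β = d`, the
minimum over all finite decompositions
`C_α = ∑ j, |K j⟩⟩⟨⟨K j|` of the operator
`C_α = α (1/d)|I⟩⟩⟨⟨I| + β (I - (1/d)|I⟩⟩⟨⟨I|)` of the maximal rank
`max_j rank (K j)` equals `⌈α⌉`. -/
theorem stmt15 (d : ℕ) (hd : 2 ≤ d) (α β : ℝ)
    (hα0 : 0 < α) (hαd : α ≤ (d : ℝ)) (hβ : 0 ≤ β)
    (hnorm : α + ((d : ℝ) ^ 2 - 1) * β = (d : ℝ)) :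
    IsLeast {r : ℕ |
      ∃ (t : ℕ) (K : Fin t → Matrix (Fin d) (Fin d) ℂ),
        ((α : ℂ) / (d : ℂ)) • dyadM (1 : Matrix (Fin d) (Fin d) ℂ) +
          (β : ℂ) • ((1 : Matrix (Fin d × Fin d) (Fin d × Fin d) ℂ) -
            ((1 : ℂ) / (d : ℂ)) • dyadM (1 : Matrix (Fin d) (Fin d) ℂ)) =
          ∑ j, dyadM (K j) ∧
        ∀ j, (K j).rank ≤ r}
      ⌈α⌉₊ := by
  have : NeZero d := ⟨by omega⟩
  have : Nontrivial (Fin d) := Fin.nontrivial_iff_two_le.mpr hd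
  have hC : ((α : ℂ) / (d : ℂ)) • dyadM (1 : Matrix (Fin d) (Fin d) ℂ) +
      (β : ℂ) • ((1 : Matrix (Fin d × Fin d) (Fin d × Fin d) ℂ) -
        ((1 : ℂ) / (d : ℂ)) • dyadM (1 : Matrix (Fin d) (Fin d) ℂ)) =
      isotropicOp (Fin d) α β := by
    simp [isotropicOp, ← Complex.coe_smul]
  have hnorm' : α + ((Fintype.card (Fin d) : ℝ) ^ 2 - 1) * β = Fintype.card (Fin d) := by
    simpa using hnorm
  simp only [hC, ← mem_schmidtCone_iff]
  constructor
  · refine isotropicOp_mem_schmidtCone hnorm' hα0 (Nat.le_ceil α) ?_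
    rw [Fintype.card_fin]
    exact Nat.ceil_le.mpr hαd
  · exact fun r hr => Nat.ceil_le.mpr (le_of_isotropicOp_mem_schmidtCone hnorm' hr)

end
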